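/- For every ε > 0 there exists C such that for all n ≥ C, A_α(K_n) ≥ n^{3/2}/(4(1+ε)³) − n/(4(1+ε)²), where A_α denotes the achromatic arboricity. -/

import Mathlib

/-- A partition of the edge set of `G` into `k` nonempty forests (acyclic classes)
such that the union of any two distinct parts contains a cycle. -/
def IsCompleteForestPartition {V : Type*} (G : SimpleGraph V) (k : ℕ)
    (P : Fin k → Set (Sym2 V)) : Prop :=
  (∀ i, (P i).Nonempty) ∧
  (∀ i j, i ≠ j → Disjoint (P i) (P j)) ∧
  (⋃ i, P i) = G.edgeSet ∧
  (∀ i, (SimpleGraph.fromEdgeSet (P i)).IsAcyclic) ∧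
  (∀ i j, i ≠ j → ¬ (SimpleGraph.fromEdgeSet (P i ∪ P j)).IsAcyclic)

/-- The achromatic arboricity of `G`: the largest number of parts in a partition of
`E(G)` into forests such that the union of any two parts contains a cycle. -/
noncomputable def achromaticArboricity {V : Type*} (G : SimpleGraph V) : ℕ :=
  sSup {k | ∃ P : Fin k → Set (Sym2 V), IsCompleteForestPartition G k P}

/-!
Edge-disjoint nonempty forests whose pairwise unions contain cycles extend to a partition of all the
edges into at least as many forests: a further edge is added to a forest if one of them stays
acyclic, and becomes a new forest otherwise. So it suffices to pack forests.

Take a block of `2p + r + O(1)` vertices, divided into `p + 1` groups, and one copy of it in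
`U × ZMod p` for each of the `p ^ 2` affine lines, so that any two copies share exactly one group.
A block carries `r + p` edge-disjoint forests with no edges inside a group, each of which connects
the same two special vertices of every group. Forests from different copies are then edge-disjoint
as well, and any two of the `p ^ 2 * (r + p)` forests connect a common pair of vertices by different
paths. Bertrand's postulate provides a prime `p` between `√(n / 10)` and `√(2 * n / 5)`, and then
`r ≈ n / p - 2 * p` gives `p ^ 2 * (r + p) ≈ n * p - p ^ 3 ≥ n ^ (3 / 2) / 4`.
-/

open SimpleGraph Function

/-! ### Acyclic graphs -/

section Acyclic

variable {V W : Type*}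

/-- The graph joining each vertex to its parent, where `none` marks the vertices without one. -/
def parentForest (parent : V → Option V) : SimpleGraph V :=
  SimpleGraph.fromRel fun u v => parent u = some v

theorem isAcyclic_parentForest {α : Type*} [LinearOrder α] {parent : V → Option V} (rank : V → α)
    (hrank : ∀ u v, parent u = some v → rank v < rank u) : (parentForest parent).IsAcyclic := by
  classical
  intro v c hc
  obtain ⟨w, hw, hmax⟩ := c.support.toFinset.exists_max_image rank ⟨v, by simp⟩
  simp only [List.mem_toFinset] at hw hmax
  have parent_of_adj : ∀ x ∈ c.support, (parentForest parent).Adj w x → parent w = some x := by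
    rintro x hx ⟨-, h | h⟩
    · exact h
    · exact absurd (hmax x hx) (hrank x w h).not_ge
  have hcycle : (c.rotate w hw).IsCycle := hc.rotate hw
  have hsnd := parent_of_adj _ ((c.mem_support_rotate_iff w hw).1 (Walk.getVert_mem_support _ _))
    ((c.rotate w hw).adj_snd hcycle.not_nil)
  have hpen := parent_of_adj _ ((c.mem_support_rotate_iff w hw).1 (Walk.getVert_mem_support _ _))
    ((c.rotate w hw).adj_penultimate hcycle.not_nil).symm
  exact hcycle.snd_ne_penultimate (Option.some_injective _ (hsnd.symm.trans hpen))

theorem disjoint_parentForest {parent parent' : V → Option V}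
    (hsame : ∀ u v, parent u = some v → parent' u ≠ some v)
    (hflip : ∀ u v, parent u = some v → parent' v ≠ some u) :
    Disjoint (parentForest parent) (parentForest parent') := by
  refine disjoint_left.2 ?_
  rintro u v ⟨-, h | h⟩ ⟨-, h' | h'⟩
  exacts [hsame _ _ h h', hflip _ _ h h', hflip _ _ h h', hsame _ _ h h']

theorem reachable_parentForest_of_parent {parent : V → Option V} {u v : V}
    (h : parent u = some v) : (parentForest parent).Reachable u v := by
  rcases eq_or_ne u v with rfl | huv
  · exact .rfl
  · exact Adj.reachable ⟨huv, .inl h⟩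

theorem isAcyclic_edge (u v : V) : (edge u v).IsAcyclic := by
  by_cases h : u = v
  · simp [h]
  · simpa using isAcyclic_bot.sup_edge_of_not_reachable (u := u) (v := v) (by simpa using h)

theorem isAcyclic_map {G : SimpleGraph V} (hG : G.IsAcyclic) (f : V ↪ W) :
    (G.map f).IsAcyclic := by
  rw [isAcyclic_iff_forall_adj_isBridge] at hG ⊢
  rintro _ _ ⟨-, u, v, huv, rfl, rfl⟩ hreach
  have : Nonempty V := ⟨u⟩
  let g : (G.map f).deleteEdges {s(f u, f v)} →g G.deleteEdges {s(u, v)} :=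
    { toFun := invFun f
      map_rel' := by
        rintro _ _ ⟨⟨-, a, b, hab, rfl, rfl⟩, hne⟩
        rw [leftInverse_invFun f.injective, leftInverse_invFun f.injective, deleteEdges_adj]
        exact ⟨hab, fun h => hne ⟨by simpa using h, f.injective.ne hab.ne⟩⟩ }
  refine hG huv ?_
  simpa [g, leftInverse_invFun f.injective _] using hreach.map g

theorem not_isAcyclic_sup_of_reachable {G H : SimpleGraph V} (hGH : Disjoint G H) {u v : V}
    (huv : u ≠ v) (hG : G.Reachable u v) (hH : H.Reachable u v) : ¬ (G ⊔ H).IsAcyclic := by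
  classical
  intro hacyclic
  obtain ⟨p, hp⟩ := hG.exists_isPath
  obtain ⟨q, hq⟩ := hH.exists_isPath
  have hpq := congrArg (fun r => r.1.edges) <| (hacyclic.subsingleton_path u v).elim
    ⟨p.mapLe le_sup_left, hp.mapLe _⟩ ⟨q.mapLe le_sup_right, hq.mapLe _⟩
  simp only [Walk.edges_mapLe_eq_edges] at hpq
  cases p with
  | nil => exact huv rfl
  | @cons _ w _ hadj p =>
    have hmem : s(u, w) ∈ q.edges := by rw [← hpq]; exact List.mem_cons_self
    exact disjoint_left.1 hGH u w hadj (q.edges_subset_edgeSet hmem)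

end Acyclic

/-! ### Packings of forests -/

section Packing

variable {V W ι : Type*}

/-- Edge-disjoint nonempty forests in `G`, any two of which have a cycle in their union. Unlike in
`IsCompleteForestPartition`, they need not cover the edges of `G`, and they are encoded as graphs
rather than as sets of edges. -/
structure IsCompleteForestPacking (G : SimpleGraph V) (T : ι → SimpleGraph V) : Prop where
  le : ∀ i, T i ≤ G
  ne_bot : ∀ i, T i ≠ ⊥
  disjoint : Pairwise (Disjoint on T)
  isAcyclic : ∀ i, (T i).IsAcyclic
  not_isAcyclic_sup : Pairwise fun i j => ¬ (T i ⊔ T j).IsAcyclic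

theorem card_le_card_of_pairwise_disjoint {α : Type*} [PartialOrder α] [OrderBot α] [Finite α]
    {f : ι → α} (hne : ∀ i, f i ≠ ⊥) (hf : Pairwise (Disjoint on f)) :
    Nat.card ι ≤ Nat.card α := by
  refine Nat.card_le_card_of_injective f fun i j hij => ?_
  by_contra hij_ne
  exact (hf hij_ne).ne (hne i) hij

namespace IsCompleteForestPacking

theorem of_reachable {T : ι → SimpleGraph V} (hdisj : Pairwise (Disjoint on T))
    (hacyc : ∀ i, (T i).IsAcyclic)
    (hreach : ∀ i j, ∃ u v, u ≠ v ∧ (T i).Reachable u v ∧ (T j).Reachable u v) :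
    IsCompleteForestPacking ⊤ T where
  le _ := le_top
  ne_bot i hi := by
    obtain ⟨u, v, huv, h, -⟩ := hreach i i
    exact huv (by simpa [hi] using h)
  disjoint := hdisj
  isAcyclic := hacyc
  not_isAcyclic_sup i j hij := by
    obtain ⟨u, v, huv, hi, hj⟩ := hreach i j
    exact not_isAcyclic_sup_of_reachable (hdisj hij) huv hi hj

variable {G : SimpleGraph V} {T : ι → SimpleGraph V}

theorem comp_injective {κ : Type*} (hT : IsCompleteForestPacking G T) {f : κ → ι}
    (hf : Injective f) : IsCompleteForestPacking G (T ∘ f) where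
  le i := hT.le (f i)
  ne_bot i := hT.ne_bot (f i)
  disjoint _ _ hij := hT.disjoint (hf.ne hij)
  isAcyclic i := hT.isAcyclic (f i)
  not_isAcyclic_sup _ _ hij := hT.not_isAcyclic_sup (hf.ne hij)

theorem map (hT : IsCompleteForestPacking G T) (f : V ↪ W) :
    IsCompleteForestPacking (G.map f) fun i => (T i).map f where
  le i := map_monotone f (hT.le i)
  ne_bot i := by
    obtain ⟨u, v, huv⟩ := ne_bot_iff_exists_adj.1 (hT.ne_bot i)
    exact ne_bot_iff_exists_adj.2 ⟨f u, f v, map_adj_apply.2 huv⟩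
  disjoint i j hij := disjoint_left.2 <| by
    rintro _ _ ⟨-, u, v, hi, rfl, rfl⟩ hj
    exact disjoint_left.1 (hT.disjoint hij) u v hi (map_adj_apply.1 hj)
  isAcyclic i := isAcyclic_map (hT.isAcyclic i) f
  not_isAcyclic_sup i j hij h := hT.not_isAcyclic_sup hij <| .of_map f <| h.anti <|
    (map_le_iff_le_comap _ _ _).2 <| sup_le ((map_le_iff_le_comap _ _ _).1 le_sup_left)
      ((map_le_iff_le_comap _ _ _).1 le_sup_right)

theorem mono {H : SimpleGraph V} (hT : IsCompleteForestPacking G T) (hGH : G ≤ H) :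
    IsCompleteForestPacking H T :=
  { hT with le := fun i => (hT.le i).trans hGH }

theorem update_sup_edge [DecidableEq ι] (hT : IsCompleteForestPacking G T) {u v : V}
    (huv : G.Adj u v) (hnot : ∀ i, ¬ (T i).Adj u v) {i : ι} (hi : (T i ⊔ edge u v).IsAcyclic) :
    IsCompleteForestPacking G (update T i (T i ⊔ edge u v)) := by
  have hle : T ≤ update T i (T i ⊔ edge u v) := le_update_iff.2 ⟨le_sup_left, fun _ _ => le_rfl⟩
  have hdisj_edge : ∀ j, Disjoint (T j) (edge u v) := fun j => (disjoint_edge _).2 (hnot j)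
  refine ⟨fun j => ?_, fun j hj => hT.ne_bot j (le_bot_iff.1 (hj ▸ hle j)), fun j l hjl => ?_,
    fun j => ?_, fun j l hjl h => hT.not_isAcyclic_sup hjl (h.anti (sup_le_sup (hle j) (hle l)))⟩
  · rcases eq_or_ne j i with rfl | hj
    · simpa using ⟨hT.le j, .inr huv⟩
    · simpa [hj] using hT.le j
  · rcases eq_or_ne j i with rfl | hj
    · simpa [onFun, hjl.symm] using ⟨hT.disjoint hjl, (hdisj_edge l).symm⟩
    · rcases eq_or_ne l i with rfl | hl
      · simpa [onFun, hj] using ⟨hT.disjoint hjl, hdisj_edge j⟩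
      · simpa [onFun, hj, hl] using hT.disjoint hjl
  · rcases eq_or_ne j i with rfl | hj
    · simpa using hi
    · simpa [hj] using hT.isAcyclic j

theorem cons_edge {k : ℕ} {T : Fin k → SimpleGraph V} (hT : IsCompleteForestPacking G T) {u v : V}
    (huv : G.Adj u v) (hnot : ∀ i, ¬ (T i).Adj u v) (hcycle : ∀ i, ¬ (T i ⊔ edge u v).IsAcyclic) :
    IsCompleteForestPacking G (Fin.cons (edge u v) T : Fin (k + 1) → SimpleGraph V) := by
  have hdisj_edge : ∀ j, Disjoint (T j) (edge u v) := fun j => (disjoint_edge _).2 (hnot j)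
  exact
  { le := Fin.cases ((edge_le_iff G).2 (.inr huv)) hT.le
    ne_bot := Fin.cases (ne_bot_iff_exists_adj.2 ⟨u, v, by simp [edge_adj, huv.ne]⟩) hT.ne_bot
    disjoint := Fin.cases (Fin.cases (absurd rfl) fun j _ => (hdisj_edge j).symm) fun i =>
      Fin.cases (fun _ => hdisj_edge i) fun j hij => hT.disjoint (ne_of_apply_ne Fin.succ hij)
    isAcyclic := Fin.cases (isAcyclic_edge u v) hT.isAcyclic
    not_isAcyclic_sup := Fin.cases
      (Fin.cases (absurd rfl) fun j _ => by simpa [sup_comm] using hcycle j) fun i =>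
        Fin.cases (fun _ => hcycle i) fun j hij =>
          hT.not_isAcyclic_sup (ne_of_apply_ne Fin.succ hij) }

theorem isCompleteForestPartition {k : ℕ} {T : Fin k → SimpleGraph V}
    (hT : IsCompleteForestPacking G T) (hcover : G ≤ ⨆ i, T i) :
    IsCompleteForestPartition G k fun i => (T i).edgeSet := by
  refine ⟨fun i => by simpa using hT.ne_bot i, fun i j hij => by simpa using hT.disjoint hij,
    ?_, fun i => by simpa using hT.isAcyclic i,
    fun i j hij => by simpa [fromEdgeSet_union] using hT.not_isAcyclic_sup hij⟩
  rw [← edgeSet_iSup, (iSup_le hT.le).antisymm hcover]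

theorem exists_card_le_of_finite [Finite V] [Finite ι] (hT : IsCompleteForestPacking G T) :
    ∃ k, Nat.card ι ≤ k ∧ ∃ T' : Fin k → SimpleGraph V,
      IsCompleteForestPacking G T' ∧ G ≤ ⨆ i, T' i := by
  classical
  let sizes := {k | ∃ T' : Fin k → SimpleGraph V, IsCompleteForestPacking G T'}
  have hbdd : BddAbove sizes :=
    ⟨Nat.card (SimpleGraph V), fun k ⟨T', hT'⟩ => by
      simpa using card_le_card_of_pairwise_disjoint hT'.ne_bot hT'.disjoint⟩
  have hcard : Nat.card ι ∈ sizes := ⟨_, hT.comp_injective (Finite.equivFin ι).symm.injective⟩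
  obtain ⟨T₀, hT₀⟩ := Nat.sSup_mem ⟨_, hcard⟩ hbdd
  obtain ⟨T', -, hT', hmax⟩ := Finite.exists_le_maximal hT₀
  refine ⟨sSup sizes, le_csSup hbdd hcard, T', hT', fun u v huv => ?_⟩
  by_contra hnot
  simp only [iSup_adj, not_exists] at hnot
  by_cases hcycle : ∀ i, ¬ (T' i ⊔ edge u v).IsAcyclic
  · exact absurd (le_csSup hbdd ⟨_, hT'.cons_edge huv hnot hcycle⟩) (Nat.lt_succ_self _).not_ge
  · push Not at hcycle
    obtain ⟨i, hi⟩ := hcycle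
    have hle := hmax (hT'.update_sup_edge huv hnot hi)
      (le_update_iff.2 ⟨le_sup_left, fun _ _ => le_rfl⟩) i
    rw [update_self] at hle
    exact hnot i (hle (.inr (by simp [edge_adj, huv.ne])))

theorem card_le_achromaticArboricity [Finite V] [Finite ι] (hT : IsCompleteForestPacking G T) :
    Nat.card ι ≤ achromaticArboricity G := by
  obtain ⟨k, hk, T', hT', hcover⟩ := hT.exists_card_le_of_finite
  refine hk.trans (le_csSup ⟨Nat.card (Set (Sym2 V)), ?_⟩ ⟨_, hT'.isCompleteForestPartition hcover⟩)
  rintro k ⟨P, hne, hdisj, -⟩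
  simpa using card_le_card_of_pairwise_disjoint (fun i => (hne i).ne_empty) hdisj

theorem card_le_achromaticArboricity_top [Finite V] [Finite W] [Finite ι]
    (hT : IsCompleteForestPacking G T) (hVW : Nat.card V ≤ Nat.card W) :
    Nat.card ι ≤ achromaticArboricity (⊤ : SimpleGraph W) := by
  have := Fintype.ofFinite V
  have := Fintype.ofFinite W
  obtain ⟨f⟩ := Embedding.nonempty_of_card_le (by simpa using hVW : Fintype.card V ≤ Fintype.card W)
  exact ((hT.map f).mono le_top).card_le_achromaticArboricity

end IsCompleteForestPacking

end Packing

/-! ### Blocks glued along a code -/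

section Block

variable {U L O F κ : Type*}

/-- The copy of `U` inside `U × F` selected by the codeword `codeword : O → F`: the vertices of
group `o` are placed at height `codeword o`. -/
def blockEmbedding (group : U → O) (codeword : O → F) : U ↪ U × F where
  toFun u := (u, codeword (group u))
  inj' _ _ h := congrArg Prod.fst h

/-- Edge-disjoint forests on a set divided into groups, whose edges join different groups, such that
every group contains two vertices connected in all the forests. These are the conditions that allow
copies of the family in several blocks to be combined. -/
structure IsGroupPacking (group : U → O) (T : κ → SimpleGraph U) : Prop where
  group_ne : ∀ k u v, (T k).Adj u v → group u ≠ group v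
  disjoint : Pairwise (Disjoint on T)
  isAcyclic : ∀ k, (T k).IsAcyclic
  exists_reachable : ∀ o, ∃ u v, u ≠ v ∧ group u = o ∧ group v = o ∧ ∀ k, (T k).Reachable u v

theorem IsGroupPacking.isCompleteForestPacking [Nonempty O] {group : U → O} {T : κ → SimpleGraph U}
    (hT : IsGroupPacking group T) {code : L → O → F}
    (hcode : Pairwise fun c d => ∃! o, code c o = code d o) :
    IsCompleteForestPacking ⊤ fun x : L × κ => (T x.2).map (blockEmbedding group (code x.1)) := by
  refine .of_reachable ?_ (fun x => isAcyclic_map (hT.isAcyclic x.2) _) ?_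
  · rintro ⟨c, k⟩ ⟨d, l⟩ hne
    refine disjoint_left.2 ?_
    rintro _ _ ⟨-, u, v, hk, rfl, rfl⟩ ⟨-, u', v', hl, hu, hv⟩
    obtain ⟨rfl, hu⟩ := Prod.ext_iff.1 hu
    obtain ⟨rfl, hv⟩ := Prod.ext_iff.1 hv
    rcases eq_or_ne c d with rfl | hcd
    · have hkl : k ≠ l := fun h => hne (h ▸ rfl)
      exact disjoint_left.1 (hT.disjoint hkl) u' v' hk hl
    · exact hT.group_ne k u' v' hk ((hcode hcd).unique hu.symm hv.symm)
  · rintro ⟨c, k⟩ ⟨d, l⟩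
    obtain ⟨o, ho⟩ : ∃ o, code c o = code d o := by
      rcases eq_or_ne c d with rfl | hcd
      · exact ⟨Classical.arbitrary O, rfl⟩
      · exact (hcode hcd).exists
    obtain ⟨u, v, huv, rfl, hv, hreach⟩ := hT.exists_reachable o
    have same_copy : ∀ w, group w = group u →
        blockEmbedding group (code c) w = blockEmbedding group (code d) w := fun w hw =>
      Prod.ext rfl <| show code c (group w) = code d (group w) by rw [hw, ho]
    refine ⟨_, _, (blockEmbedding group (code c)).injective.ne huv,
      (hreach k).map (Embedding.map _ _).toHom, ?_⟩
    rw [same_copy u rfl, same_copy v hv]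
    exact (hreach l).map (Embedding.map _ _).toHom

/-- The code of the lines `y = a * x + b` with `(a, b) : F × F`: its coordinates are the points
`e i` of `F`, and the point at infinity `none` at which the slope is recorded. -/
def affineCode [Field F] (e : O ≃ F) (line : F × F) : Option O → F
  | none => line.1
  | some i => line.1 * e i + line.2

theorem pairwise_existsUnique_affineCode_eq [Field F] (e : O ≃ F) :
    Pairwise fun c d => ∃! o, affineCode e c o = affineCode e d o := by
  rintro ⟨a, b⟩ ⟨a', b'⟩ hne
  rcases eq_or_ne a a' with rfl | ha
  · have hb : b ≠ b' := fun h => hne (h ▸ rfl)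
    refine ⟨none, rfl, ?_⟩
    rintro (_ | i) h
    · rfl
    · exact absurd (add_left_cancel h) hb
  · have ha' : a - a' ≠ 0 := sub_ne_zero.2 ha
    refine ⟨some (e.symm ((b' - b) / (a - a'))), ?_, ?_⟩
    · simp only [affineCode, Equiv.apply_symm_apply]
      field_simp
      ring
    · rintro (_ | i) h
      · exact absurd h ha
      · rw [Option.some_inj, Equiv.eq_symm_apply, eq_div_iff ha']
        simp only [affineCode] at h
        linear_combination h

end Block

/-! ### The forests of a block -/

section LocalForest

variable {I W ι : Type*}

/-- The vertices of a block. They are divided into the groups `Option I`: each group contains two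
special vertices, the hubs lie in the group `none`, and the ordinary vertices are distributed
over the groups `some i`. -/
inductive LocalVertex (I W ι : Type*)
  | special (o : Option I) (a : Bool)
  | ordinary (w : W)
  | hub (s : Option ι)

namespace LocalVertex

/-- The kinds of vertices of a block as the summands of a disjoint union. -/
def equivSum : LocalVertex I W ι ≃ (Option I × Bool) ⊕ W ⊕ Option ι where
  toFun
    | special o a => .inl (o, a)
    | ordinary w => .inr (.inl w)
    | hub s => .inr (.inr s)
  invFun
    | .inl (o, a) => special o a
    | .inr (.inl w) => ordinary w
    | .inr (.inr s) => hub s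
  left_inv u := by cases u <;> rfl
  right_inv x := by rcases x with _ | _ | _ <;> rfl

instance [Finite I] [Finite W] [Finite ι] : Finite (LocalVertex I W ι) := .of_equiv _ equivSum.symm

theorem card_eq [Finite I] [Finite W] [Finite ι] :
    Nat.card (LocalVertex I W ι) = 2 * Nat.card I + Nat.card W + Nat.card ι + 3 := by
  simp only [Nat.card_congr equivSum, Nat.card_sum, Nat.card_prod, Finite.card_option,
    Nat.card_eq_fintype_card (α := Bool), Fintype.card_bool]
  ring

/-- The group of a vertex, where `e w` consists of the group of the ordinary vertex `w` and of
its label within that group. -/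
def group (e : W → I × ι) : LocalVertex I W ι → Option I
  | special o _ => o
  | ordinary w => some (e w).1
  | hub _ => none

/-- The distance of a vertex from the root in the forests given by `parent` below, or an upper bound
for it; it shows that they are acyclic. -/
def rank [DecidableEq I] : W ⊕ I → LocalVertex I W ι → ℕ
  | .inl _, ordinary _ => 0
  | .inl _, hub _ => 1
  | .inr _, hub _ => 0
  | .inr i, special o _ => if o = some i then 1 else 2
  | _, _ => 2

variable [LinearOrder I] [DecidableEq ι]

/-- The parent functions of the forests of a block. For `w : W`, the ordinary vertex `w` is joined
to all special vertices, except that those of its own group are reached through a hub. For `i : I`,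
the special vertices of the group `some i` are the centres of a double star, connected through the
hub `none`. -/
def parent (e : W → I × ι) : W ⊕ I → LocalVertex I W ι → Option (LocalVertex I W ι)
  | .inl w, special o _ => some (if o = some (e w).1 then hub (some (e w).2) else ordinary w)
  | .inl w, hub s => if s = some (e w).2 then some (ordinary w) else none
  | .inr i, special o a =>
    -- The order of `I` decides which two of the four edges between the special vertices of the
    -- groups `some i` and `some j` go to the double star at `i`, leaving the others to `j`.
    some (if o = some i then hub none else special (some i) (a ^^ o.any (i < ·)))
  | _, _ => none

variable {e : W → I × ι} {k l : W ⊕ I} {u v : LocalVertex I W ι}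

theorem rank_lt_of_parent_eq (h : parent e k u = some v) : rank k v < rank k u := by
  rcases k with w | i <;> rcases u with ⟨o, a⟩ | w' | s <;> simp only [parent] at h <;>
    grind [rank]

theorem group_ne_of_parent_eq (h : parent e k u = some v) : group e u ≠ group e v := by
  rcases k with w | i <;> rcases u with ⟨o, a⟩ | w' | s <;> simp only [parent] at h <;>
    grind [group]

theorem parent_ne_of_parent_eq (he : Injective e) (hkl : k ≠ l) (h : parent e k u = some v) :
    parent e l u ≠ some v := by
  rcases k with w | i <;> rcases l with w' | j <;> rcases u with ⟨o, a⟩ | _ | s <;>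
    simp only [parent] at h ⊢ <;> grind [Injective]

theorem parent_ne_of_parent_eq_flip (h : parent e k u = some v) : parent e l v ≠ some u := by
  rcases k with w | i <;> rcases l with w' | j <;> rcases u with ⟨o, _ | _⟩ | _ | s <;>
    simp only [parent] at h <;> grind [parent]

theorem reachable_special (e : W → I × ι) (k : W ⊕ I) (o : Option I) (a b : Bool) :
    (parentForest (parent e k)).Reachable (special o a) (special o b) := by
  have reachable_of_common_parent : ∀ {o a b v}, parent e k (special o a) = some v →
      parent e k (special o b) = some v →
      (parentForest (parent e k)).Reachable (special o a) (special o b) := fun ha hb =>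
    (reachable_parentForest_of_parent ha).trans (reachable_parentForest_of_parent hb).symm
  rcases k with w | i
  · exact reachable_of_common_parent rfl rfl
  · by_cases ho : o = some i
    · exact reachable_of_common_parent (v := hub none) (by simp [parent, ho]) (by simp [parent, ho])
    · have to_centre : ∀ a, (parentForest (parent e (.inr i))).Reachable (special o a)
          (special (some i) (a ^^ o.any (i < ·))) := fun a =>
        reachable_parentForest_of_parent (by simp [parent, ho])
      have centres := reachable_of_common_parent (o := some i) (v := hub none)
        (a := a ^^ o.any (i < ·)) (b := b ^^ o.any (i < ·)) (by simp [parent]) (by simp [parent])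
      exact (to_centre a).trans <| centres.trans (to_centre b).symm

theorem isGroupPacking (he : Injective e) :
    IsGroupPacking (group e) fun k => parentForest (parent e k) where
  group_ne k u v h := h.2.elim group_ne_of_parent_eq fun h => (group_ne_of_parent_eq h).symm
  disjoint k l hkl := disjoint_parentForest (fun _ _ => parent_ne_of_parent_eq he hkl)
    fun _ _ => parent_ne_of_parent_eq_flip
  isAcyclic k := isAcyclic_parentForest (rank k) fun _ _ => rank_lt_of_parent_eq
  exists_reachable o := ⟨special o false, special o true, by simp, rfl, rfl,
    fun k => reachable_special e k o _ _⟩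

end LocalVertex

end LocalForest

/-! ### Numerical bounds -/

section Bound

theorem card_sq_mul_le_achromaticArboricity_top (F : Type*) [Field F] [Finite F] {V : Type*}
    [Finite V] {r h : ℕ} (hr : r ≤ Nat.card F * h)
    (hV : (2 * Nat.card F + r + h + 3) * Nat.card F ≤ Nat.card V) :
    Nat.card F ^ 2 * (r + Nat.card F) ≤ achromaticArboricity (⊤ : SimpleGraph V) := by
  let label : Fin r ↪ Fin (Nat.card F) × Fin h :=
    (Fin.castLEEmb hr).trans finProdFinEquiv.symm.toEmbedding
  have hpacking := (LocalVertex.isGroupPacking label.injective).isCompleteForestPacking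
    (pairwise_existsUnique_affineCode_eq (Finite.equivFin F).symm)
  have hcard := hpacking.card_le_achromaticArboricity_top (W := V)
    (by simpa only [Nat.card_prod, LocalVertex.card_eq, Nat.card_fin] using hV)
  simpa only [Nat.card_prod, Nat.card_sum, Nat.card_fin, ← sq] using hcard

theorem exists_prime_sq_le {n : ℕ} (hn : 10 ≤ n) :
    ∃ p, p.Prime ∧ 5 * p ^ 2 ≤ 2 * n ∧ n ≤ 10 * p ^ 2 := by
  have hsqrt : Nat.sqrt (n / 10) ≠ 0 := by
    have : 0 < n / 10 := by omega
    exact (Nat.sqrt_pos.2 this).ne'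
  obtain ⟨p, hp, hlt, hle⟩ := Nat.exists_prime_lt_and_le_two_mul _ hsqrt
  have hupper : Nat.sqrt (n / 10) ^ 2 ≤ n / 10 := Nat.sqrt_le' _
  have hlower : n / 10 < p ^ 2 := (Nat.lt_succ_sqrt' _).trans_le (Nat.pow_le_pow_left hlt 2)
  have hp_sq : p ^ 2 ≤ 4 * Nat.sqrt (n / 10) ^ 2 := by nlinarith
  exact ⟨p, hp, by omega, by omega⟩

theorem cube_le_mul_sq {p r : ℝ} (hp : 32 ≤ p) (hlower : p ≤ 2 * r + 24) (hupper : r + 11 ≤ 8 * p) :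
    (2 * p + r + 12) ^ 3 ≤ 16 * p * (r + p) ^ 2 := by
  set x := 2 * p + r + 12 with hx
  have hx_lower : 0 ≤ x - 5 / 2 * p := by linarith only [hx, hlower]
  have hx_upper : 0 ≤ 321 / 32 * p - x := by linarith
  have hx_sub : 0 ≤ x - 11 / 8 * p := by linarith
  calc x ^ 3 ≤ 16 * p * (x - 11 / 8 * p) ^ 2 := by
        have hx0 : 0 ≤ x := by linarith
        have hp0 : 0 ≤ p := by linarith
        -- The difference of the two sides is `(x - 5 / 2 * p) * (321 / 32 * p - x) * x` plus `p`
        -- times a positive definite quadratic form in `x` and `p`.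
        nlinarith [mul_nonneg (mul_nonneg hx_lower hx_upper) hx0,
          mul_nonneg hp0 (sq_nonneg (x - 11 / 4 * p)), mul_nonneg hp0 (sq_nonneg p),
          mul_nonneg hp0 (sq_nonneg x)]
    _ ≤ 16 * p * (r + p) ^ 2 := by
        gcongr
        linarith

theorem rpow_three_halves_le_of_cube_le_sq {x y : ℝ} (hx : 0 ≤ x) (hy : 0 ≤ y)
    (h : x ^ 3 ≤ y ^ 2) : x ^ ((3 : ℝ) / 2) ≤ y := by
  have hsqrt : √(x ^ 3) = x ^ ((3 : ℝ) / 2) := by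
    rw [Real.sqrt_eq_rpow, ← Real.rpow_natCast_mul hx]
    norm_num
  exact hsqrt ▸ (Real.sqrt_le_left hy).2 h

theorem exists_prime_cube_le_sq {n : ℕ} (hn : 10000 ≤ n) :
    ∃ p r, p.Prime ∧ r ≤ p * 8 ∧ (2 * p + r + 8 + 3) * p ≤ n ∧
      n ^ 3 ≤ (4 * (p ^ 2 * (r + p))) ^ 2 := by
  obtain ⟨p, hp, hlower, hupper⟩ := exists_prime_sq_le (by omega : 10 ≤ n)
  have hp32 : 32 ≤ p := by nlinarith
  -- The largest `r` for which `p` times the size of a block with eight hubs is at most `n`.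
  obtain ⟨r, hr⟩ : ∃ r, n / p = 2 * p + r + 11 := by
    have hle : 2 * p + 11 ≤ n / p := (Nat.le_div_iff_mul_le hp.pos).2 (by nlinarith)
    exact ⟨n / p - (2 * p + 11), by omega⟩
  have hn_lt : n < p * (2 * p + r + 12) := by
    simpa only [hr] using Nat.lt_mul_div_succ n hp.pos
  have hp_le : p ≤ 2 * r + 24 := by nlinarith
  have hr_le : r + 11 ≤ 8 * p := by
    have := Nat.div_le_of_le_mul (by linarith : n ≤ p * (10 * p))
    omega
  have hcube : (2 * p + r + 12) ^ 3 ≤ 16 * p * (r + p) ^ 2 := by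
    exact_mod_cast cube_le_mul_sq (p := p) (r := r) (by exact_mod_cast hp32)
      (by exact_mod_cast hp_le) (by exact_mod_cast hr_le)
  refine ⟨p, r, hp, by omega, by simpa only [hr] using Nat.div_mul_le_self n p, ?_⟩
  calc n ^ 3 ≤ (p * (2 * p + r + 12)) ^ 3 := by gcongr
    _ = p ^ 3 * (2 * p + r + 12) ^ 3 := mul_pow _ _ _
    _ ≤ p ^ 3 * (16 * p * (r + p) ^ 2) := by gcongr
    _ = (4 * (p ^ 2 * (r + p))) ^ 2 := by ring

theorem achromaticArboricity_asymptotic_lower_bound_general (n : ℕ) (hn : 10000 ≤ n) :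
    (n : ℝ) ^ ((3 : ℝ) / 2) / 4 ≤ (achromaticArboricity (⊤ : SimpleGraph (Fin n)) : ℝ) := by
  obtain ⟨p, r, hp, hr, hcard, hcube⟩ := exists_prime_cube_le_sq hn
  have := Fact.mk hp
  have hforests : p ^ 2 * (r + p) ≤ achromaticArboricity (⊤ : SimpleGraph (Fin n)) := by
    simpa using card_sq_mul_le_achromaticArboricity_top (ZMod p) (V := Fin n)
      (by simpa using hr) (by simpa using hcard)
  have hpow : (n : ℝ) ^ ((3 : ℝ) / 2) ≤ (4 * (p ^ 2 * (r + p)) : ℕ) :=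
    rpow_three_halves_le_of_cube_le_sq (by positivity) (by positivity) (by exact_mod_cast hcube)
  rw [div_le_iff₀' (by norm_num)]
  exact hpow.trans (by exact_mod_cast Nat.mul_le_mul_left 4 hforests)

end Bound

/-- For every `ε > 0` there exists `C` such that for all `n ≥ C`,
the achromatic arboricity of `K_n` is at least `n^{3/2}/(4(1+ε)³) − n/(4(1+ε)²)`. -/
theorem achromaticArboricity_asymptotic_lower_bound :
    ∀ ε : ℝ, 0 < ε → ∃ C : ℕ, ∀ n : ℕ, C ≤ n →
      (n : ℝ) ^ ((3 : ℝ) / 2) / (4 * (1 + ε) ^ 3) - (n : ℝ) / (4 * (1 + ε) ^ 2) ≤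
        (achromaticArboricity (⊤ : SimpleGraph (Fin n)) : ℝ) := by
  refine fun ε hε => ⟨10000, fun n hn => ?_⟩
  have hpow : 1 ≤ (1 + ε) ^ 3 := one_le_pow₀ (by linarith)
  calc (n : ℝ) ^ ((3 : ℝ) / 2) / (4 * (1 + ε) ^ 3) - (n : ℝ) / (4 * (1 + ε) ^ 2)
      ≤ (n : ℝ) ^ ((3 : ℝ) / 2) / (4 * (1 + ε) ^ 3) := sub_le_self _ (by positivity)
    _ ≤ (n : ℝ) ^ ((3 : ℝ) / 2) / 4 := by gcongr; linarith
    _ ≤ _ := achromaticArboricity_asymptotic_lower_bound_general n hn
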